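/- If n, m, a are non-negative integers with n > 200, m ≥ 1, n − m ≥ 3, and F_n − F_m = 7^a, then n − m ≤ 161 and moreover n < 1.20246 · 10^{16}. -/

import Mathlib

/-!
The equation `F_n - F_m = 7 ^ a` has no solution at all with `a ≥ 4`, for purely local reasons, and
`n > 200` together with `n - m ≥ 3` forces `a ≥ 4` since `F_n - F_m ≥ F_{n-1}`. Hence the hypotheses
are contradictory, and the stated bounds hold vacuously.

For a modulus `N`, let `P` be `gcd (F_N, F_{N+1} - 1, 7 ^ N - 1)`: modulo `P`, both `k ↦ F_k` and
`k ↦ 7 ^ k` are `N`-periodic, so `F_n ≡ F_m + 7 ^ a [MOD P]` restricts the residues of `(n, m, a)`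
modulo `N`. When `16 * 7 ^ j` divides `N` with `j ≤ 3`, the Fibonacci sequence is also `N`-periodic
modulo `7 ^ (j + 1)`, and `F_n ≡ F_m [MOD 7 ^ (j + 1)]` because `a ≥ 4`. Along the chain
`48 ∣ 240 ∣ 1680 ∣ 11760 ∣ 82320` these congruences leave fewer and fewer residue classes:
modulo `240` essentially those of the genuine solutions `F_6 - F_1 = F_6 - F_2 = 7` and
`F_14 - F_9 = 7 ^ 3` and their reflections under `F_{-k} = (-1) ^ (k + 1) F_k`. The powers of `7`
in the later moduli then remove these as well, because their exponents are smaller than `4`.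
The search through the residue classes is the boolean function `dead`, evaluated by the kernel;
`dead_eq_false` is its soundness.
-/

namespace FibSevenSieve

/-- `force x f` is `f x`; the recursion on `x` makes the kernel evaluate `x` to a numeral before
it is substituted into `f`. -/
def force (x : ℕ) (f : ℕ → Bool) : Bool :=
  Nat.rec (motive := fun _ => Bool) (f 0) (fun k _ => f (Nat.succ k)) x

theorem force_eq (x : ℕ) (f : ℕ → Bool) : force x f = f x := by
  cases x <;> rfl

/-- Fast doubling in continuation-passing style: `fibMod Q d n f` is
`f (F_n mod Q) (F_{n+1} mod Q)`. The value does not depend on the depth `d`; the evaluation is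
fast when `n < 2 ^ d`. -/
def fibMod (Q : ℕ) : ℕ → ℕ → (ℕ → ℕ → Bool) → Bool
  | 0, n, f => f (Nat.fib n % Q) (Nat.fib (n + 1) % Q)
  | d + 1, n, f => fibMod Q d (n / 2) fun a b =>
      -- `Q - 1` plays the role of `-1`, avoiding truncated subtraction
      force ((a * (2 * b + (Q - 1) * a)) % Q) fun x =>
      force ((a * a + b * b) % Q) fun y =>
      bif Nat.beq (n % 2) 0 then f x y else force ((x + y) % Q) fun z => f y z

theorem fibMod_eq (Q : ℕ) (hQ : 0 < Q) (d : ℕ) : ∀ (n : ℕ) (f : ℕ → ℕ → Bool),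
    fibMod Q d n f = f (Nat.fib n % Q) (Nat.fib (n + 1) % Q) := by
  induction d with
  | zero => intro n f; rfl
  | succ d ih =>
    intro n f
    rw [fibMod, ih]
    simp only [force_eq]
    set k := n / 2 with hk
    have e1 : (Nat.fib k % Q) * (2 * (Nat.fib (k + 1) % Q) + (Q - 1) * (Nat.fib k % Q))
        ≡ Nat.fib (2 * k) [MOD Q] := by
      have h1 : (Nat.fib k % Q) * (2 * (Nat.fib (k + 1) % Q) + (Q - 1) * (Nat.fib k % Q))
          ≡ Nat.fib k * (2 * Nat.fib (k + 1) + (Q - 1) * Nat.fib k) [MOD Q] :=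
        (Nat.mod_modEq _ _).mul (((Nat.mod_modEq _ _).mul_left _).add
          ((Nat.mod_modEq _ _).mul_left _))
      have h2 : Nat.fib k * (2 * Nat.fib (k + 1) + (Q - 1) * Nat.fib k)
          = Nat.fib (2 * k) + Q * (Nat.fib k * Nat.fib k) := by
        have h3 : Nat.fib k ≤ 2 * Nat.fib (k + 1) := by
          have := Nat.fib_le_fib_succ (n := k)
          omega
        rw [Nat.fib_two_mul]
        obtain ⟨q, rfl⟩ : ∃ q, Q = q + 1 := ⟨Q - 1, by omega⟩
        obtain ⟨c, hc⟩ := Nat.exists_eq_add_of_le h3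
        rw [hc, Nat.add_sub_cancel_left, Nat.add_sub_cancel]
        ring
      rw [h2] at h1
      exact h1.trans (by simp [Nat.ModEq])
    have e2 : (Nat.fib k % Q) * (Nat.fib k % Q) + (Nat.fib (k + 1) % Q) * (Nat.fib (k + 1) % Q)
        ≡ Nat.fib (2 * k + 1) [MOD Q] := by
      rw [Nat.fib_two_mul_add_one, sq, sq, add_comm (Nat.fib (k + 1) * _)]
      exact ((Nat.mod_modEq _ _).mul (Nat.mod_modEq _ _)).add
        ((Nat.mod_modEq _ _).mul (Nat.mod_modEq _ _))
    rcases Nat.mod_two_eq_zero_or_one n with h0 | h0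
    · have hn : n = 2 * k := by omega
      rw [h0, e1, e2, ← hn]
      rfl
    · have hn : n = 2 * k + 1 := by omega
      rw [h0, e1, e2, ← Nat.add_mod, ← Nat.fib_add_two, hn]
      rfl

/-- A level `(q, P, S)` refines residues modulo `M` to residues modulo `M * q`, where Fibonacci
numbers have period `M * q` modulo `P * S`, powers of `7` have period `M * q` modulo `P`, and `S`
divides `7 ^ 4`. The function `valid` tests this along a list of levels. -/
def valid : List (ℕ × ℕ × ℕ) → ℕ → Bool
  | [], _ => true
  | (q, P, S) :: ls, M =>
      Nat.blt 0 q && Nat.blt 0 (P * S) && Nat.beq (7 ^ 4 % S) 0 &&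
      Nat.beq (7 ^ (M * q) % P) (1 % P) &&
      fibMod (P * S) 17 (M * q) (fun a b => Nat.beq a 0 && Nat.beq b (1 % (P * S))) &&
      valid ls (M * q)

/-- Whether every lift of the residue class `(r, s, t)` modulo `M` of `(n, m, a)` violates, at one
of the given levels `(q, P, S)`, one of the congruences `F_n ≡ F_m [MOD S]` and
`F_n ≡ F_m + 7 ^ a [MOD P]`. -/
def dead : List (ℕ × ℕ × ℕ) → ℕ → ℕ → ℕ → ℕ → Bool
  | [], _, _, _, _ => false
  | (q, P, S) :: ls, M, r, s, t =>
      (List.range q).all fun i => fibMod (P * S) 17 (r + M * i) fun x _ =>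
      (List.range q).all fun j => fibMod (P * S) 17 (s + M * j) fun y _ =>
        !(Nat.beq (x % S) (y % S)) ||
        (List.range q).all fun k =>
          !(Nat.beq (x % P) ((y + 7 ^ (t + M * k)) % P)) ||
          dead ls (M * q) (r + M * i) (s + M * j) (t + M * k)

theorem fib_mod_period {Q N : ℕ} (h0 : Nat.fib N % Q = 0) (h1 : Nat.fib (N + 1) % Q = 1 % Q)
    (n : ℕ) : Nat.fib (n % N) % Q = Nat.fib n % Q := by
  have key : Function.Periodic (fun n => Nat.fib n % Q) N := by
    intro n
    suffices h : Nat.fib (n + N) ≡ Nat.fib n [MOD Q] ∧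
        Nat.fib (n + 1 + N) ≡ Nat.fib (n + 1) [MOD Q] from h.1
    induction n with
    | zero =>
      refine ⟨?_, ?_⟩
      · simpa [Nat.ModEq] using h0
      · simpa [Nat.ModEq, add_comm] using h1
    | succ n ih =>
      refine ⟨ih.2, ?_⟩
      have := ih.1.add ih.2
      rw [show n + 1 + N = n + N + 1 by ring, ← Nat.fib_add_two, ← Nat.fib_add_two] at this
      rwa [show n + 1 + 1 + N = n + N + 2 by ring]
  exact key.map_mod_nat n

theorem pow_mod_period {P N : ℕ} (h : 7 ^ N % P = 1 % P) (a : ℕ) :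
    7 ^ (a % N) ≡ 7 ^ a [MOD P] := by
  conv_rhs => rw [← Nat.mod_add_div a N, pow_add, pow_mul]
  have h' : 7 ^ N ≡ 1 [MOD P] := h
  simpa using ((h'.pow (a / N)).mul_left (7 ^ (a % N))).symm

/-- Soundness of the sieve: the residue class of an actual solution with `a ≥ 4` is never dead. -/
theorem dead_eq_false {n m a : ℕ} (h : Nat.fib n = Nat.fib m + 7 ^ a) (ha : 4 ≤ a)
    (ls : List (ℕ × ℕ × ℕ)) : ∀ M : ℕ, valid ls M = true →
    dead ls M (n % M) (m % M) (a % M) = false := by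
  induction ls with
  | nil => intro M _; rfl
  | cons l ls ih =>
    obtain ⟨q, P, S⟩ := l
    intro M hv
    simp only [valid, Bool.and_eq_true, Nat.blt_eq, Nat.beq_eq] at hv
    obtain ⟨⟨⟨⟨⟨hq, hQ⟩, hS⟩, h7⟩, hF⟩, hv⟩ := hv
    rw [fibMod_eq _ hQ] at hF
    simp only [Bool.and_eq_true, Nat.beq_eq] at hF
    have hper := fib_mod_period hF.1 hF.2
    have hSa : 7 ^ a % S = 0 :=
      Nat.mod_eq_zero_of_dvd ((Nat.dvd_of_mod_eq_zero hS).trans (pow_dvd_pow 7 ha))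
    have hih := ih (M * q) hv
    rw [Nat.mod_mul, Nat.mod_mul, Nat.mod_mul] at hih
    rw [← Bool.not_eq_true]
    intro hd
    simp only [dead, fibMod_eq _ hQ, List.all_eq_true, List.mem_range] at hd
    -- the digits of `n`, `m`, `a` that lift their residues from modulus `M` to modulus `M * q`
    have h1 := hd (n / M % q) (Nat.mod_lt _ hq) (m / M % q) (Nat.mod_lt _ hq)
    have pn := hper n
    have pm := hper m
    have pa := pow_mod_period h7 a
    rw [Nat.mod_mul (x := n) (a := M)] at pn
    rw [Nat.mod_mul (x := m) (a := M)] at pm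
    rw [Nat.mod_mul] at pa
    rw [pn, pm, Bool.or_eq_true] at h1
    have hPd : P ∣ P * S := Dvd.intro _ rfl
    have hSd : S ∣ P * S := Dvd.intro_left _ rfl
    rw [Nat.mod_mod_of_dvd _ hSd, Nat.mod_mod_of_dvd _ hSd, Nat.mod_mod_of_dvd _ hPd] at h1
    rcases h1 with h1 | h1
    · have : Nat.fib n % S = Nat.fib m % S := by rw [h, Nat.add_mod, hSa]; simp
      simp [this] at h1
    · simp only [List.all_eq_true, List.mem_range] at h1
      have h2 := h1 (a / M % q) (Nat.mod_lt _ hq)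
      rw [hih, Bool.or_false] at h2
      have : Nat.fib n % P
          = (Nat.fib m % (P * S) + 7 ^ (a % M + M * (a / M % q))) % P := by
        rw [h]
        refine Nat.ModEq.symm (Nat.ModEq.add ?_ pa)
        exact Nat.mod_mod_of_dvd _ hPd
      rw [← this] at h2
      simp at h2

/-- The levels for the chain of moduli `48 ∣ 240 ∣ 1680 ∣ 11760 ∣ 82320`. -/
def levels : List (ℕ × ℕ × ℕ) :=
  [(48, 288, 7),
   (5, 295969940640, 7),
   (7, 180150948206188216082448480, 49),
   (7, 186776757166970339646454110367418169565819501920, 343),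
   (7, 21921679083885679620955656740689473115405968166013518694535608135520, 2401)]

theorem valid_levels : valid levels 1 = true := by decide +kernel

theorem dead_levels : dead levels 1 0 0 0 = true := by decide +kernel

theorem no_solution {n m a : ℕ} (ha : 4 ≤ a) : Nat.fib n ≠ Nat.fib m + 7 ^ a := by
  intro h
  have h1 := dead_eq_false h ha levels 1 valid_levels
  rw [Nat.mod_one, Nat.mod_one, Nat.mod_one, dead_levels] at h1
  exact absurd h1 (by decide)

end FibSevenSieve

/-- If `n > 200`, `m ≥ 1`, `n - m ≥ 3` and `F_n - F_m = 7 ^ a`, then `n - m ≤ 161`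
and `n < 1.20246 · 10^16`. -/
theorem fib_sub_fib_pow_seven_reduced_bound (n m a : ℕ) (hn : 200 < n) (hm : 1 ≤ m)
    (hnm : 3 ≤ n - m) (h : (Nat.fib n : ℤ) - Nat.fib m = 7 ^ a) :
    n - m ≤ 161 ∧ (n : ℝ) < 1.20246 * 10 ^ 16 := by
  exfalso
  have h' : Nat.fib n = Nat.fib m + 7 ^ a := by
    zify
    linarith
  by_cases ha : 4 ≤ a
  · exact FibSevenSieve.no_solution ha h'
  · -- `7 ^ a ≤ 7 ^ 3` is smaller than `F_n - F_m ≥ F_n - F_{n-2} = F_{n-1} ≥ F_20`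
    obtain ⟨k, rfl⟩ : ∃ k, n = k + 2 := ⟨n - 2, by omega⟩
    have h1 : Nat.fib m ≤ Nat.fib k := Nat.fib_mono (by omega)
    have h2 : Nat.fib 20 ≤ Nat.fib (k + 1) := Nat.fib_mono (by omega)
    have h3 : 7 ^ a ≤ 7 ^ 3 := Nat.pow_le_pow_right (by norm_num) (by omega)
    have h4 : Nat.fib 20 = 6765 := by norm_num
    rw [Nat.fib_add_two] at h'
    omega
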